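/- Let A be a unital C*-algebra, B ⊆ A a commutative unital C*-subalgebra, E : A → B a faithful conditional expectation onto B, and T ∈ A an element satisfying the B-valued circular moment relations with respect to E. If T is quasinilpotent, then for all b₁, b₂ ∈ B the element b₁ T b₂ is quasinilpotent. -/

import Mathlib

open Filter
open scoped ComplexOrder

section Preamble

variable {A : Type*} [CStarAlgebra A] [PartialOrder A] [StarOrderedRing A]

/-- The absolute value `(a* a)^{1/2}` of an element of a C*-algebra. -/
noncomputable def cabs (a : A) : A := CFC.sqrt (star a * a)

/-- `E : A → A` is a conditional expectation onto the C*-subalgebra `B`: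
it takes values in `B`, fixes `B`, is a `B`-bimodule map, and is positive and contractive. -/
structure IsCondExp (B : StarSubalgebra ℂ A) (E : A →ₗ[ℂ] A) : Prop where
  mem_range : ∀ x : A, E x ∈ B
  fixes : ∀ b ∈ B, E b = b
  bimodule : ∀ b₁ ∈ B, ∀ b₂ ∈ B, ∀ x : A, E (b₁ * x * b₂) = b₁ * E x * b₂
  positive : ∀ x : A, 0 ≤ x → 0 ≤ E x
  contractive : ∀ x : A, ‖E x‖ ≤ ‖x‖

/-- `word T [(ε₁,b₁),…,(εₙ,bₙ)] = T^{ε₁} * b₁ * ⋯ * T^{εₙ} * bₙ`, where `true` stands for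
the exponent `1` and `false` for the exponent `*`. -/
def word (T : A) (l : List (Bool × A)) : A :=
  (l.map (fun p => (cond p.1 T (star T)) * p.2)).prod

/-- A word is balanced when there are as many `*`'s as `1`'s among the exponents. -/
abbrev IsBalanced (l : List (Bool × A)) : Prop :=
  2 * l.countP (fun p => p.1) = l.length

/-- `T` satisfies the `B`-valued circular moment relations with respect to `E`:
the expectation of any unbalanced word vanishes, and the expectation of a nonempty balanced word
`T^{ε₁} b₁ ⋯ T^{εₙ} bₙ` satisfies the moment-cumulant recursion of a `B`-valued circular
element, where the sum runs over those positions `j ∈ {2,…,n}` (here `j = i + 2` for the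
`i`-th entry of the tail, `0`-based) for which `ε_j ≠ ε₁` and the prefix `ε₁,…,ε_j` is
balanced. -/
structure IsBCircular (B : StarSubalgebra ℂ A) (E : A →ₗ[ℂ] A) (T : A) : Prop where
  expect_unbalanced : ∀ l : List (Bool × A), (∀ p ∈ l, p.2 ∈ B) →
    ¬ IsBalanced l → E (word T l) = 0
  expect_cons_one : ∀ b ∈ B, ∀ tl : List (Bool × A), (∀ p ∈ tl, p.2 ∈ B) →
    IsBalanced ((true, b) :: tl) →
    E (word T ((true, b) :: tl)) =
      ∑ i ∈ Finset.range tl.length,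
        if (tl.getD i (true, 1)).1 = false ∧ IsBalanced ((true, b) :: tl.take (i + 1)) then
          E (T * (b * E (word T (tl.take i))) * star T) * (tl.getD i (true, 1)).2 *
            E (word T (tl.drop (i + 1)))
        else 0
  expect_cons_star : ∀ b ∈ B, ∀ tl : List (Bool × A), (∀ p ∈ tl, p.2 ∈ B) →
    IsBalanced ((false, b) :: tl) →
    E (word T ((false, b) :: tl)) =
      ∑ i ∈ Finset.range tl.length,
        if (tl.getD i (true, 1)).1 = true ∧ IsBalanced ((false, b) :: tl.take (i + 1)) then
          E (star T * (b * E (word T (tl.take i))) * T) * (tl.getD i (true, 1)).2 *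
            E (word T (tl.drop (i + 1)))
        else 0

end Preamble

/-!
Write `T^ε` for `T` or `T*`. The class of `B`-circular elements is stable under `T ↦ b₁ T b₂`, since
the factors `b₁`, `b₂` can be absorbed into the coefficients of a word. In the moment recursion of a
circular element over a commutative `B` every summand is a product of positive elements of `B`.
Since `E(S^ε x (S^ε)*) ≤ (‖b₁‖ ‖b₂‖)² E(T^ε x (T^ε)*)` for `S = b₁ T b₂` and `0 ≤ x ∈ B`, comparing
the recursions for `S` and `T` bounds the moments of `(Sⁿ)* Sⁿ` by those of `(Tⁿ)* Tⁿ`. As `E` is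
faithful, the moments `E(yᵖ)` of a positive `y` determine `‖y‖`, so
`‖Sⁿ‖ ≤ (‖b₁‖ ‖b₂‖)ⁿ ‖Tⁿ‖`, and Gelfand's formula compares the spectral radii.
-/

section SpectralRadius

open scoped NNReal

theorem spectralRadius_le_of_nnnorm_pow_le {A : Type*} [NormedRing A] [NormedAlgebra ℂ A]
    [CompleteSpace A] {a b : A} {r : ℝ≥0} (h : ∀ n, ‖a ^ n‖₊ ≤ r ^ n * ‖b ^ n‖₊) :
    spectralRadius ℂ a ≤ r * spectralRadius ℂ b := by
  refine le_of_tendsto_of_tendsto (spectrum.pow_nnnorm_pow_one_div_tendsto_nhds_spectralRadius a)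
    (ENNReal.Tendsto.const_mul (spectrum.pow_nnnorm_pow_one_div_tendsto_nhds_spectralRadius b)
      (Or.inr ENNReal.coe_ne_top)) ?_
  filter_upwards [eventually_gt_atTop 0] with n hn
  calc (‖a ^ n‖₊ : ENNReal) ^ (1 / n : ℝ)
      ≤ ((r : ENNReal) ^ n * ‖b ^ n‖₊) ^ (1 / n : ℝ) := by
        gcongr
        exact_mod_cast h n
    _ = r * (‖b ^ n‖₊ : ENNReal) ^ (1 / n : ℝ) := by
        rw [ENNReal.mul_rpow_of_nonneg _ _ (by positivity), one_div,
          ENNReal.pow_rpow_inv_natCast hn.ne']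

end SpectralRadius

section Order

variable {A : Type*} [CStarAlgebra A] [PartialOrder A] [StarOrderedRing A]

theorem mul_le_mul_of_commute {x x' y y' : A} (hxy : Commute x y) (hx'y : Commute x' y)
    (hx'y' : Commute x' y') (hx : 0 ≤ x) (hxx' : x ≤ x') (hy : 0 ≤ y) (hyy' : y ≤ y') :
    x * y ≤ x' * y' := by
  have hleft : 0 ≤ (x' - x) * y :=
    Commute.mul_nonneg (sub_nonneg.2 hxx') hy (hx'y.sub_left hxy)
  have hright : 0 ≤ x' * (y' - y) :=
    Commute.mul_nonneg (hx.trans hxx') (sub_nonneg.2 hyy') (hx'y'.sub_right hx'y)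
  rw [sub_mul, sub_nonneg] at hleft
  rw [mul_sub, sub_nonneg] at hright
  exact hleft.trans hright

theorem conjugate_le_norm_sq_smul_of_commute {b x : A} (hbx : Commute b x) (hx : 0 ≤ x) :
    b * x * star b ≤ ‖b‖ ^ 2 • x := by
  have hx_bb : Commute x (b * star b) := by
    have hbx' : Commute (star b) x := by
      simpa only [(IsSelfAdjoint.of_nonneg hx).star_eq] using Commute.star_star hbx
    exact (hbx.mul_left hbx').symm
  calc b * x * star b = x * (b * star b) := by rw [hbx.eq, mul_assoc]
    _ ≤ x * algebraMap ℝ A (‖b‖ ^ 2) :=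
        mul_le_mul_of_commute hx_bb hx_bb (Algebra.commutes _ x).symm hx le_rfl
          (mul_star_self_nonneg b) CStarAlgebra.mul_star_le_algebraMap_norm_sq
    _ = ‖b‖ ^ 2 • x := by rw [← Algebra.commutes, ← Algebra.smul_def]

theorem exists_pos_forall_pow_smul_le_pow {y : A} (hy : 0 ≤ y) {L : ℝ} (hL : 0 ≤ L)
    (hLy : L < ‖y‖) : ∃ z : A, 0 ≤ z ∧ z ≠ 0 ∧ ∀ p : ℕ, L ^ p • z ≤ y ^ p := by
  have : Nontrivial A := ⟨y, 0, norm_pos_iff.1 (hL.trans_lt hLy)⟩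
  have hsa : IsSelfAdjoint y := .of_nonneg hy
  -- A continuous substitute for the indicator function of `(L, ∞)`.
  let f : ℝ → ℝ := fun t => min 1 (max (t - L) 0)
  have hf : Continuous f := by fun_prop
  refine ⟨cfc f y, cfc_nonneg fun t _ => by positivity, fun hzero => ?_, fun p => ?_⟩
  · rw [← cfc_zero ℝ y, cfc_eq_cfc_iff_eqOn] at hzero
    have hpos : 0 < f ‖y‖ := lt_min one_pos (lt_max_of_lt_left (sub_pos.2 hLy))
    exact hpos.ne' (hzero (CStarAlgebra.norm_mem_spectrum_of_nonneg hy))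
  · rw [← cfc_smul (L ^ p) f y, ← cfc_pow_id (R := ℝ) y p]
    refine cfc_mono (fun t ht => ?_) (hf.const_smul (L ^ p)).continuousOn (by fun_prop)
    have ht0 : 0 ≤ t := spectrum_nonneg_of_nonneg hy ht
    rcases le_total t L with htL | htL
    · have hft : f t = 0 := by simp [f, htL]
      rw [hft, smul_zero]
      positivity
    · calc L ^ p • f t ≤ L ^ p * 1 := by
            rw [smul_eq_mul]
            gcongr
            exact min_le_left _ _
        _ ≤ t ^ p := by
            rw [mul_one]
            gcongr

end Order

section ConditionalExpectation

variable {A : Type*} [CStarAlgebra A] [PartialOrder A] {B : StarSubalgebra ℂ A} {E : A →ₗ[ℂ] A}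

namespace IsCondExp

theorem map_mul_left (hE : IsCondExp B E) {b : A} (hb : b ∈ B) (x : A) : E (b * x) = b * E x := by
  simpa using hE.bimodule b hb 1 (one_mem B) x

theorem map_mul_right (hE : IsCondExp B E) {b : A} (hb : b ∈ B) (x : A) :
    E (x * b) = E x * b := by
  simpa using hE.bimodule 1 (one_mem B) b hb x

variable [StarOrderedRing A]

theorem monotone (hE : IsCondExp B E) : Monotone E := fun x y hxy => by
  simpa using hE.positive _ (sub_nonneg.2 hxy)

theorem norm_le_of_norm_map_pow_le (hE : IsCondExp B E)
    (hfaithful : ∀ x : A, E (star x * x) = 0 → x = 0) {y : A} (hy : 0 ≤ y) {K : ℝ} (hK : 0 ≤ K)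
    (h : ∀ p : ℕ, ‖E (y ^ p)‖ ≤ K ^ p) : ‖y‖ ≤ K := by
  by_contra! hKy
  obtain ⟨L, hKL, hLy⟩ := exists_between hKy
  have hL : 0 < L := hK.trans_lt hKL
  obtain ⟨z, hz, hz_ne, hzy⟩ := exists_pos_forall_pow_smul_le_pow hy hL.le hLy
  have hbound (p : ℕ) : ‖E z‖ ≤ (K / L) ^ p := by
    have hEzy : L ^ p • E z ≤ E (y ^ p) := by
      simpa only [LinearMap.map_smul_of_tower] using hE.monotone (hzy p)
    have hnorm : L ^ p * ‖E z‖ ≤ ‖E (y ^ p)‖ := by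
      simpa [norm_smul, abs_of_pos hL] using CStarAlgebra.norm_le_norm_of_nonneg_of_le
        (smul_nonneg (by positivity) (hE.positive z hz)) hEzy
    rw [div_pow, le_div_iff₀' (by positivity)]
    exact hnorm.trans (h p)
  have hEz : E z = 0 := norm_le_zero_iff.1 <| ge_of_tendsto'
    (tendsto_pow_atTop_nhds_zero_of_lt_one (div_nonneg hK hL.le) ((div_lt_one hL).2 hKL)) hbound
  obtain ⟨w, rfl⟩ := CStarAlgebra.nonneg_iff_eq_star_mul_self.1 hz
  exact hz_ne (by simp [hfaithful w hEz])

end IsCondExp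

end ConditionalExpectation

section Words

variable {A : Type*}

/-- The letter `T^ε` of a word in `T` and `T*`, with the encoding of exponents used in `word`:
`true` stands for `1` and `false` for `*`. -/
def letter [Star A] (T : A) (e : Bool) : A := cond e T (star T)

/-- The word with unit coefficients that spells `((Tⁿ)* Tⁿ)ᵖ`. -/
def starPowMulPowWord (A : Type*) [One A] (n p : ℕ) : List (Bool × A) :=
  (List.replicate p (List.replicate n (false, 1) ++ List.replicate n (true, 1))).flatten

theorem length_starPowMulPowWord (A : Type*) [One A] (n p : ℕ) :
    (starPowMulPowWord A n p).length = 2 * n * p := by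
  simp only [starPowMulPowWord, List.length_flatten, List.map_replicate, List.length_append,
    List.length_replicate, List.sum_replicate_nat]
  ring

theorem snd_eq_one_of_mem_starPowMulPowWord [One A] {n p : ℕ} {q : Bool × A}
    (hq : q ∈ starPowMulPowWord A n p) : q.2 = 1 := by
  simp only [starPowMulPowWord, List.mem_flatten, List.mem_replicate] at hq
  obtain ⟨_, ⟨-, rfl⟩, hq⟩ := hq
  rcases List.mem_append.1 hq with hq | hq <;> rw [List.eq_of_mem_replicate hq]

theorem isBalanced_iff_of_map_fst_eq {l l' : List (Bool × A)}
    (h : l.map Prod.fst = l'.map Prod.fst) : IsBalanced l ↔ IsBalanced l' := by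
  have hcount (l : List (Bool × A)) :
      l.countP (fun p => p.1) = (l.map Prod.fst).countP (fun e => e) := by
    simp only [List.countP_map, Function.comp_def]
  rw [IsBalanced, IsBalanced, hcount, hcount, h, ← List.length_map Prod.fst, h, List.length_map]

/-- The positions in `tl` that can be paired with `p` in the moment recursion for the word
`p :: tl`, as `0`-based indices into `tl`. -/
def partners [One A] (p : Bool × A) (tl : List (Bool × A)) : Finset ℕ :=
  {i ∈ Finset.range tl.length |
    (tl.getD i (true, 1)).1 = (!p.1) ∧ IsBalanced (p :: tl.take (i + 1))}

theorem mem_partners [One A] {p : Bool × A} {tl : List (Bool × A)} {i : ℕ} :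
    i ∈ partners p tl ↔ i < tl.length ∧
      (tl.getD i (true, 1)).1 = (!p.1) ∧ IsBalanced (p :: tl.take (i + 1)) := by
  simp only [partners, Finset.mem_filter, Finset.mem_range]

theorem partners_eq_of_map_fst_eq [One A] {p q : Bool × A} {l l' : List (Bool × A)}
    (hpq : p.1 = q.1) (h : l.map Prod.fst = l'.map Prod.fst) : partners p l = partners q l' := by
  ext i
  have hlen : l.length = l'.length := by simpa using congrArg List.length h
  have hfst : (l.getD i (true, 1)).1 = (l'.getD i (true, 1)).1 := by
    simpa only [← List.getD_map] using congrArg (·.getD i true) h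
  have hbal : IsBalanced (p :: l.take (i + 1)) ↔ IsBalanced (q :: l'.take (i + 1)) :=
    isBalanced_iff_of_map_fst_eq (by rw [List.map_cons, List.map_cons, List.map_take, h, hpq,
      List.map_take])
  rw [mem_partners, mem_partners, hlen, hfst, hpq, hbal]

variable [CStarAlgebra A]

@[simp]
theorem word_nil (T : A) : word T [] = 1 := rfl

@[simp]
theorem word_cons (T : A) (p : Bool × A) (l : List (Bool × A)) :
    word T (p :: l) = letter T p.1 * p.2 * word T l := rfl

theorem word_append (T : A) (l l' : List (Bool × A)) : word T (l ++ l') = word T l * word T l' := by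
  rw [word, List.map_append, List.prod_append, word, word]

theorem word_replicate (T : A) (n : ℕ) (e : Bool) :
    word T (List.replicate n (e, 1)) = letter T e ^ n := by
  rw [word, List.map_replicate, List.prod_replicate, mul_one, letter]

theorem word_starPowMulPowWord (T : A) (n p : ℕ) :
    word T (starPowMulPowWord A n p) = (star (T ^ n) * T ^ n) ^ p := by
  induction p with
  | zero => simp [starPowMulPowWord]
  | succ p ih =>
    rw [starPowMulPowWord, List.replicate_succ, List.flatten_cons, word_append, word_append,
      word_replicate, word_replicate, ← starPowMulPowWord, ih, pow_succ', star_pow]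
    rfl

/-- The summand of the moment recursion for `p :: tl` in which `p` is paired with entry `i`
of `tl`. -/
noncomputable def pairingTerm (E : A →ₗ[ℂ] A) (T : A) (p : Bool × A) (tl : List (Bool × A))
    (i : ℕ) : A :=
  E (letter T p.1 * (p.2 * E (word T (tl.take i))) * star (letter T p.1)) *
    (tl.getD i (true, 1)).2 * E (word T (tl.drop (i + 1)))

theorem isBCircular_iff {B : StarSubalgebra ℂ A} {E : A →ₗ[ℂ] A} {T : A} : IsBCircular B E T ↔
    (∀ l : List (Bool × A), (∀ p ∈ l, p.2 ∈ B) → ¬ IsBalanced l → E (word T l) = 0) ∧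
    ∀ (p : Bool × A) (tl : List (Bool × A)), p.2 ∈ B → (∀ q ∈ tl, q.2 ∈ B) →
      IsBalanced (p :: tl) →
      E (word T (p :: tl)) = ∑ i ∈ partners p tl, pairingTerm E T p tl i := by
  simp only [partners, Finset.sum_filter]
  constructor
  · refine fun hT => ⟨hT.expect_unbalanced, ?_⟩
    rintro ⟨_ | _, b⟩ tl hb htl hbal
    · simpa [pairingTerm, letter] using hT.expect_cons_star b hb tl htl hbal
    · simpa [pairingTerm, letter] using hT.expect_cons_one b hb tl htl hbal
  · refine fun ⟨hunbal, hcons⟩ => ⟨hunbal, fun b hb tl htl hbal => ?_, fun b hb tl htl hbal => ?_⟩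
    · simpa [pairingTerm, letter] using hcons (true, b) tl hb htl hbal
    · simpa [pairingTerm, letter] using hcons (false, b) tl hb htl hbal

end Words

section Absorb

variable {A : Type*} [CStarAlgebra A]

/-- The left factor in `(b₁ T b₂)^ε = leftFactor b₁ b₂ ε * T^ε * leftFactor b₂ b₁ ε`; the right
factor is obtained by exchanging `b₁` and `b₂`. -/
def leftFactor (b₁ b₂ : A) (e : Bool) : A := cond e b₁ (star b₂)

theorem letter_mul_mul (b₁ b₂ T : A) (e : Bool) :
    letter (b₁ * T * b₂) e = leftFactor b₁ b₂ e * letter T e * leftFactor b₂ b₁ e := by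
  cases e
  · simp only [letter, leftFactor, cond_false, star_mul, mul_assoc]
  · rfl

theorem star_leftFactor (b₁ b₂ : A) (e : Bool) :
    star (leftFactor b₁ b₂ e) = leftFactor b₂ b₁ (!e) := by
  cases e
  · exact star_star b₂
  · rfl

theorem norm_leftFactor_mul_norm_leftFactor (b₁ b₂ : A) (e : Bool) :
    ‖leftFactor b₁ b₂ e‖ * ‖leftFactor b₂ b₁ e‖ = ‖b₁‖ * ‖b₂‖ := by
  cases e
  · simp only [leftFactor, cond_false, norm_star, mul_comm]
  · rfl

/-- The left factor of the first letter of a word in `b₁ T b₂`: the part of the word that `absorb`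
cannot move into a coefficient. -/
def headFactor (b₁ b₂ : A) : List (Bool × A) → A
  | [] => 1
  | p :: _ => leftFactor b₁ b₂ p.1

/-- Rewrites a word in `b₁ T b₂` as a word in `T`, up to `headFactor`, by moving the factors between
two consecutive letters into the coefficient between them. -/
def absorb (b₁ b₂ : A) : List (Bool × A) → List (Bool × A)
  | [] => []
  | p :: l => (p.1, leftFactor b₂ b₁ p.1 * p.2 * headFactor b₁ b₂ l) :: absorb b₁ b₂ l

theorem map_fst_absorb (b₁ b₂ : A) (l : List (Bool × A)) :
    (absorb b₁ b₂ l).map Prod.fst = l.map Prod.fst := by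
  induction l with
  | nil => rfl
  | cons p l ih => rw [absorb, List.map_cons, List.map_cons, ih]

theorem partners_absorb (b₁ b₂ c : A) (p : Bool × A) (tl : List (Bool × A)) :
    partners (p.1, c) (absorb b₁ b₂ tl) = partners p tl :=
  partners_eq_of_map_fst_eq rfl (map_fst_absorb b₁ b₂ tl)

theorem drop_absorb (b₁ b₂ : A) (l : List (Bool × A)) (i : ℕ) :
    (absorb b₁ b₂ l).drop i = absorb b₁ b₂ (l.drop i) := by
  induction l generalizing i with
  | nil => simp only [absorb, List.drop_nil]
  | cons p l ih =>
    cases i with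
    | zero => rfl
    | succ i => exact ih i

theorem snd_getD_absorb (b₁ b₂ : A) {l : List (Bool × A)} {i : ℕ} (hi : i < l.length)
    (d : Bool × A) :
    ((absorb b₁ b₂ l).getD i d).2 =
      leftFactor b₂ b₁ (l.getD i d).1 * (l.getD i d).2 * headFactor b₁ b₂ (l.drop (i + 1)) := by
  induction l generalizing i with
  | nil => simp at hi
  | cons p l ih =>
    cases i with
    | zero => rfl
    | succ i => exact ih (Nat.lt_of_succ_lt_succ hi)

theorem headFactor_drop (b₁ b₂ : A) {l : List (Bool × A)} {i : ℕ} (hi : i < l.length)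
    (d : Bool × A) : headFactor b₁ b₂ (l.drop i) = leftFactor b₁ b₂ (l.getD i d).1 := by
  rw [List.drop_eq_getElem_cons hi, List.getD_eq_getElem _ _ hi, headFactor]

theorem headFactor_mul_word_take_absorb (b₁ b₂ T : A) (l : List (Bool × A)) (i : ℕ) :
    headFactor b₁ b₂ l * word T ((absorb b₁ b₂ l).take i) =
      word (b₁ * T * b₂) (l.take i) * headFactor b₁ b₂ (l.drop i) := by
  induction l generalizing i with
  | nil => simp [absorb]
  | cons p l ih =>
    cases i with
    | zero => simp
    | succ i =>
      calc leftFactor b₁ b₂ p.1 * (letter T p.1 * (leftFactor b₂ b₁ p.1 * p.2 *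
              headFactor b₁ b₂ l) * word T ((absorb b₁ b₂ l).take i))
          = letter (b₁ * T * b₂) p.1 * p.2 *
              (headFactor b₁ b₂ l * word T ((absorb b₁ b₂ l).take i)) := by
            rw [letter_mul_mul]
            simp only [mul_assoc]
        _ = letter (b₁ * T * b₂) p.1 * p.2 * word (b₁ * T * b₂) (l.take i) *
              headFactor b₁ b₂ (l.drop i) := by
            rw [ih i, mul_assoc _ (word _ _)]

theorem headFactor_mul_word_absorb (b₁ b₂ T : A) (l : List (Bool × A)) :
    headFactor b₁ b₂ l * word T (absorb b₁ b₂ l) = word (b₁ * T * b₂) l := by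
  have hlen : (absorb b₁ b₂ l).length = l.length := by
    simpa using congrArg List.length (map_fst_absorb b₁ b₂ l)
  have h := headFactor_mul_word_take_absorb b₁ b₂ T l l.length
  rwa [List.take_length, List.drop_length, List.take_of_length_le hlen.le, headFactor, mul_one] at h

variable {B : StarSubalgebra ℂ A} {b₁ b₂ : A}

theorem leftFactor_mem (hb₁ : b₁ ∈ B) (hb₂ : b₂ ∈ B) (e : Bool) : leftFactor b₁ b₂ e ∈ B := by
  cases e
  · exact star_mem hb₂
  · exact hb₁

theorem headFactor_mem (hb₁ : b₁ ∈ B) (hb₂ : b₂ ∈ B) (l : List (Bool × A)) :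
    headFactor b₁ b₂ l ∈ B := by
  cases l with
  | nil => exact one_mem B
  | cons p l => exact leftFactor_mem hb₁ hb₂ p.1

theorem snd_mem_of_mem_absorb (hb₁ : b₁ ∈ B) (hb₂ : b₂ ∈ B) {l : List (Bool × A)}
    (hl : ∀ p ∈ l, p.2 ∈ B) : ∀ p ∈ absorb b₁ b₂ l, p.2 ∈ B := by
  induction l with
  | nil => simp [absorb]
  | cons p l ih =>
    rw [List.forall_mem_cons] at hl
    rw [absorb, List.forall_mem_cons]
    exact ⟨mul_mem (mul_mem (leftFactor_mem hb₂ hb₁ p.1) hl.1) (headFactor_mem hb₁ hb₂ l),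
      ih hl.2⟩

variable [PartialOrder A] {E : A →ₗ[ℂ] A} {T : A}

theorem IsCondExp.map_word_mul_mul (hE : IsCondExp B E) (hb₁ : b₁ ∈ B) (hb₂ : b₂ ∈ B)
    (l : List (Bool × A)) :
    E (word (b₁ * T * b₂) l) = headFactor b₁ b₂ l * E (word T (absorb b₁ b₂ l)) := by
  rw [← headFactor_mul_word_absorb, hE.map_mul_left (headFactor_mem hb₁ hb₂ l)]

theorem IsCondExp.map_conj_letter_mul_mul (hE : IsCondExp B E) (hb₁ : b₁ ∈ B) (hb₂ : b₂ ∈ B)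
    (e : Bool) (x : A) :
    E (letter (b₁ * T * b₂) e * x * star (letter (b₁ * T * b₂) e)) =
      leftFactor b₁ b₂ e *
        E (letter T e * (leftFactor b₂ b₁ e * x * star (leftFactor b₂ b₁ e)) *
          star (letter T e)) *
        star (leftFactor b₁ b₂ e) := by
  have hmem := leftFactor_mem hb₁ hb₂ e
  rw [← hE.bimodule _ hmem _ (star_mem hmem), letter_mul_mul]
  simp only [star_mul, mul_assoc]

theorem IsCondExp.pairingTerm_mul_mul (hE : IsCondExp B E) (hb₁ : b₁ ∈ B) (hb₂ : b₂ ∈ B)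
    {p : Bool × A} {tl : List (Bool × A)} {i : ℕ} (hi : i ∈ partners p tl) :
    pairingTerm E (b₁ * T * b₂) p tl i =
      leftFactor b₁ b₂ p.1 *
        pairingTerm E T (p.1, leftFactor b₂ b₁ p.1 * p.2 * headFactor b₁ b₂ tl)
          (absorb b₁ b₂ tl) i := by
  obtain ⟨hlt, hpair, -⟩ := mem_partners.1 hi
  have hcoeff : leftFactor b₂ b₁ p.1 * p.2 * headFactor b₁ b₂ tl *
        E (word T ((absorb b₁ b₂ tl).take i)) =
      leftFactor b₂ b₁ p.1 * (p.2 * E (word (b₁ * T * b₂) (tl.take i))) *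
        star (leftFactor b₂ b₁ p.1) := by
    rw [mul_assoc _ (headFactor _ _ _), ← hE.map_mul_left (headFactor_mem hb₁ hb₂ tl),
      headFactor_mul_word_take_absorb, hE.map_mul_right (headFactor_mem hb₁ hb₂ _),
      headFactor_drop b₁ b₂ hlt (true, 1), hpair, star_leftFactor]
    simp only [mul_assoc]
  rw [pairingTerm, pairingTerm, hE.map_conj_letter_mul_mul hb₁ hb₂,
    hE.map_word_mul_mul hb₁ hb₂ (tl.drop (i + 1)), snd_getD_absorb b₁ b₂ hlt, hpair,
    star_leftFactor b₁ b₂, drop_absorb, hcoeff]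
  simp only [mul_assoc]

theorem IsBCircular.mul_mul (hT : IsBCircular B E T) (hE : IsCondExp B E) (hb₁ : b₁ ∈ B)
    (hb₂ : b₂ ∈ B) : IsBCircular B E (b₁ * T * b₂) := by
  obtain ⟨hunbal, hcons⟩ := isBCircular_iff.1 hT
  have hmem {l : List (Bool × A)} (hl : ∀ p ∈ l, p.2 ∈ B) := snd_mem_of_mem_absorb hb₁ hb₂ hl
  refine isBCircular_iff.2 ⟨fun l hl hbal => ?_, fun p tl hp htl hbal => ?_⟩
  · rw [hE.map_word_mul_mul hb₁ hb₂, hunbal _ (hmem hl), mul_zero]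
    rwa [isBalanced_iff_of_map_fst_eq (map_fst_absorb b₁ b₂ l)]
  · rw [← isBalanced_iff_of_map_fst_eq (map_fst_absorb b₁ b₂ _), absorb] at hbal
    rw [hE.map_word_mul_mul hb₁ hb₂, absorb, headFactor,
      hcons _ _ (mul_mem (mul_mem (leftFactor_mem hb₂ hb₁ p.1) hp) (headFactor_mem hb₁ hb₂ tl))
        (hmem htl) hbal,
      Finset.mul_sum, partners_absorb]
    exact Finset.sum_congr rfl fun i hi => (hE.pairingTerm_mul_mul hb₁ hb₂ hi).symm

end Absorb

section Comparison

variable {A : Type*} [CStarAlgebra A] {B : StarSubalgebra ℂ A}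

theorem real_smul_mem {x : A} (r : ℝ) (hx : x ∈ B) : r • x ∈ B := by
  simpa only [Complex.coe_smul] using B.smul_mem hx (r : ℂ)

variable [PartialOrder A]

/-- The coefficients of a word are positive elements of `B`; for commutative `B`, the expectations
of such words in a `B`-circular element are again positive. -/
def HasPosCoeffs (B : StarSubalgebra ℂ A) (l : List (Bool × A)) : Prop :=
  ∀ p ∈ l, p.2 ∈ B ∧ 0 ≤ p.2

namespace HasPosCoeffs

variable {p : Bool × A} {l : List (Bool × A)}

theorem head (hl : HasPosCoeffs B (p :: l)) : p.2 ∈ B ∧ 0 ≤ p.2 := hl p List.mem_cons_self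

theorem tail (hl : HasPosCoeffs B (p :: l)) : HasPosCoeffs B l :=
  fun q hq => hl q (List.mem_cons_of_mem p hq)

theorem take (hl : HasPosCoeffs B l) (i : ℕ) : HasPosCoeffs B (l.take i) :=
  fun q hq => hl q (List.mem_of_mem_take hq)

theorem drop (hl : HasPosCoeffs B l) (i : ℕ) : HasPosCoeffs B (l.drop i) :=
  fun q hq => hl q (List.mem_of_mem_drop hq)

theorem getD (hl : HasPosCoeffs B l) {i : ℕ} (hi : i < l.length) (d : Bool × A) :
    (l.getD i d).2 ∈ B ∧ 0 ≤ (l.getD i d).2 := by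
  rw [List.getD_eq_getElem _ _ hi]
  exact hl _ (List.getElem_mem hi)

theorem starPowMulPowWord [StarOrderedRing A] (B : StarSubalgebra ℂ A) (n p : ℕ) :
    HasPosCoeffs B (starPowMulPowWord A n p) := fun q hq => by
  rw [snd_eq_one_of_mem_starPowMulPowWord hq]
  exact ⟨one_mem B, zero_le_one⟩

end HasPosCoeffs

/-- On the positive elements of `B`, the covariance maps `x ↦ E(S^ε x (S^ε)*)` of `S` are dominated
by `c²` times those of `T`. The square makes `c` the constant that compares `‖S ^ n‖ ^ (1 / n)` with
`‖T ^ n‖ ^ (1 / n)`. -/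
def CovarianceLE (B : StarSubalgebra ℂ A) (E : A →ₗ[ℂ] A) (c : ℝ) (S T : A) : Prop :=
  ∀ e, ∀ x ∈ B, 0 ≤ x →
    E (letter S e * x * star (letter S e)) ≤ c ^ 2 • E (letter T e * x * star (letter T e))

variable [StarOrderedRing A] {E : A →ₗ[ℂ] A} {S T : A}

theorem IsCondExp.pairingTerm_nonneg (hE : IsCondExp B E)
    (hBcomm : ∀ x ∈ B, ∀ y ∈ B, x * y = y * x) {p : Bool × A} {tl : List (Bool × A)} {i : ℕ}
    (hpos : HasPosCoeffs B (p :: tl)) (hi : i < tl.length)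
    (htake : 0 ≤ E (word T (tl.take i))) (hdrop : 0 ≤ E (word T (tl.drop (i + 1)))) :
    0 ≤ pairingTerm E T p tl i := by
  obtain ⟨hp, hp_nonneg⟩ := hpos.head
  obtain ⟨hd, hd_nonneg⟩ := hpos.tail.getD hi (true, 1)
  have hmem := hE.mem_range
  have hcoeff : 0 ≤ p.2 * E (word T (tl.take i)) :=
    Commute.mul_nonneg hp_nonneg htake (hBcomm _ hp _ (hmem _))
  have hconj := hE.positive _ (star_right_conjugate_nonneg hcoeff (letter T p.1))
  exact Commute.mul_nonneg (Commute.mul_nonneg hconj hd_nonneg (hBcomm _ (hmem _) _ hd)) hdrop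
    (hBcomm _ (mul_mem (hmem _) hd) _ (hmem _))

theorem IsBCircular.map_word_nonneg (hT : IsBCircular B E T) (hE : IsCondExp B E)
    (hBcomm : ∀ x ∈ B, ∀ y ∈ B, x * y = y * x) {l : List (Bool × A)} (hl : HasPosCoeffs B l) :
    0 ≤ E (word T l) := by
  obtain ⟨hunbal, hcons⟩ := isBCircular_iff.1 hT
  induction hn : l.length using Nat.strong_induction_on generalizing l with
  | _ n ih =>
    by_cases hbal : IsBalanced l
    swap
    · rw [hunbal l (fun p hp => (hl p hp).1) hbal]
    cases l with
    | nil => exact hE.positive _ zero_le_one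
    | cons p tl =>
      rw [hcons p tl hl.head.1 (fun q hq => (hl.tail q hq).1) hbal]
      refine Finset.sum_nonneg fun i hi => ?_
      have hlt := (mem_partners.1 hi).1
      rw [List.length_cons] at hn
      exact hE.pairingTerm_nonneg hBcomm hl hlt
        (ih _ (by rw [List.length_take]; lia) (hl.tail.take i) rfl)
        (ih _ (by rw [List.length_drop]; lia) (hl.tail.drop (i + 1)) rfl)

theorem IsCondExp.pairingTerm_le (hE : IsCondExp B E)
    (hBcomm : ∀ x ∈ B, ∀ y ∈ B, x * y = y * x) {c : ℝ}
    (hST : CovarianceLE B E c S T) {p : Bool × A} {tl : List (Bool × A)} {i : ℕ}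
    (hpos : HasPosCoeffs B (p :: tl)) (hi : i < tl.length) {r s : ℝ}
    (htake_nonneg : 0 ≤ E (word S (tl.take i)))
    (htake : E (word S (tl.take i)) ≤ r • E (word T (tl.take i)))
    (hdrop_nonneg : 0 ≤ E (word S (tl.drop (i + 1))))
    (hdrop : E (word S (tl.drop (i + 1))) ≤ s • E (word T (tl.drop (i + 1)))) :
    pairingTerm E S p tl i ≤ (c ^ 2 * r * s) • pairingTerm E T p tl i := by
  obtain ⟨hp, hp_nonneg⟩ := hpos.head
  obtain ⟨hd, hd_nonneg⟩ := hpos.tail.getD hi (true, 1)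
  have hmem := hE.mem_range
  have hsmul {r : ℝ} {x : A} : r • E x ∈ B := real_smul_mem r (hmem x)
  have hmul_le {x x' y y' : A} (hx : x ∈ B) (hx' : x' ∈ B) (hy : y ∈ B) (hy' : y' ∈ B) :=
    mul_le_mul_of_commute (hBcomm x hx y hy) (hBcomm x' hx' y hy) (hBcomm x' hx' y' hy')
  have hcoeff_nonneg : 0 ≤ p.2 * E (word S (tl.take i)) :=
    Commute.mul_nonneg hp_nonneg htake_nonneg (hBcomm _ hp _ (hmem _))
  have hcoeff : p.2 * E (word S (tl.take i)) ≤ r • (p.2 * E (word T (tl.take i))) := by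
    rw [← mul_smul_comm]
    exact hmul_le hp hp (hmem _) hsmul hp_nonneg le_rfl htake_nonneg htake
  have hconj_nonneg := hE.positive _ (star_right_conjugate_nonneg hcoeff_nonneg (letter S p.1))
  have hconj : E (letter S p.1 * (p.2 * E (word S (tl.take i))) * star (letter S p.1)) ≤
      (c ^ 2 * r) • E (letter T p.1 * (p.2 * E (word T (tl.take i))) * star (letter T p.1)) :=
    calc _ ≤ c ^ 2 • E (letter T p.1 * (p.2 * E (word S (tl.take i))) * star (letter T p.1)) :=
          hST p.1 _ (mul_mem hp (hmem _)) hcoeff_nonneg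
      _ ≤ c ^ 2 • E (letter T p.1 * (r • (p.2 * E (word T (tl.take i)))) * star (letter T p.1)) :=
          smul_le_smul_of_nonneg_left
            (hE.monotone (star_right_conjugate_le_conjugate hcoeff (letter T p.1))) (sq_nonneg c)
      _ = _ := by rw [mul_smul_comm, smul_mul_assoc, E.map_smul_of_tower, smul_smul]
  rw [pairingTerm, pairingTerm, ← smul_mul_smul_comm, ← smul_mul_assoc]
  exact hmul_le (mul_mem (hmem _) hd) (mul_mem hsmul hd) (hmem _) hsmul
    (Commute.mul_nonneg hconj_nonneg hd_nonneg (hBcomm _ (hmem _) _ hd))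
    (hmul_le (hmem _) hsmul hd hd hconj_nonneg hconj hd_nonneg le_rfl) hdrop_nonneg hdrop

theorem IsBCircular.map_word_le (hS : IsBCircular B E S) (hT : IsBCircular B E T)
    (hE : IsCondExp B E) (hBcomm : ∀ x ∈ B, ∀ y ∈ B, x * y = y * x) {c : ℝ}
    (hST : CovarianceLE B E c S T) {l : List (Bool × A)} (hl : HasPosCoeffs B l) :
    E (word S l) ≤ c ^ l.length • E (word T l) := by
  obtain ⟨hunbalS, hconsS⟩ := isBCircular_iff.1 hS
  obtain ⟨hunbalT, hconsT⟩ := isBCircular_iff.1 hT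
  induction hn : l.length using Nat.strong_induction_on generalizing l with
  | _ n ih =>
    by_cases hbal : IsBalanced l
    swap
    · rw [hunbalS l (fun p hp => (hl p hp).1) hbal, hunbalT l (fun p hp => (hl p hp).1) hbal,
        smul_zero]
    cases l with
    | nil => simp [← hn]
    | cons p tl =>
      have htl : ∀ q ∈ tl, q.2 ∈ B := fun q hq => (hl.tail q hq).1
      rw [hconsS p tl hl.head.1 htl hbal, hconsT p tl hl.head.1 htl hbal, Finset.smul_sum]
      refine Finset.sum_le_sum fun i hi => ?_
      have hlt := (mem_partners.1 hi).1
      rw [List.length_cons] at hn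
      have hpow : c ^ n = c ^ 2 * c ^ (tl.take i).length * c ^ (tl.drop (i + 1)).length := by
        rw [← pow_add, ← pow_add, List.length_take, List.length_drop]
        congr 1
        lia
      have htake := hl.tail.take i
      have hdrop := hl.tail.drop (i + 1)
      rw [hpow]
      exact hE.pairingTerm_le hBcomm hST hl hlt
        (hS.map_word_nonneg hE hBcomm htake)
        (ih _ (by rw [List.length_take]; lia) htake rfl)
        (hS.map_word_nonneg hE hBcomm hdrop)
        (ih _ (by rw [List.length_drop]; lia) hdrop rfl)

theorem IsBCircular.norm_pow_le_mul_norm_pow (hS : IsBCircular B E S) (hT : IsBCircular B E T)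
    (hE : IsCondExp B E) (hfaithful : ∀ x : A, E (star x * x) = 0 → x = 0)
    (hBcomm : ∀ x ∈ B, ∀ y ∈ B, x * y = y * x) {c : ℝ} (hc : 0 ≤ c)
    (hST : CovarianceLE B E c S T) (n : ℕ) :
    ‖S ^ n‖ ≤ c ^ n * ‖T ^ n‖ := by
  rcases subsingleton_or_nontrivial A with hA | hA
  · rw [norm_of_subsingleton (S ^ n)]
    positivity
  suffices h : ‖star (S ^ n) * S ^ n‖ ≤ (c ^ n * ‖T ^ n‖) ^ 2 by
    rw [CStarRing.norm_star_mul_self, ← sq] at h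
    exact le_of_sq_le_sq h (by positivity)
  refine hE.norm_le_of_norm_map_pow_le hfaithful (star_mul_self_nonneg _) (by positivity)
    fun p => ?_
  have hpos := HasPosCoeffs.starPowMulPowWord B n p
  have hmoment := CStarAlgebra.norm_le_norm_of_nonneg_of_le (hS.map_word_nonneg hE hBcomm hpos)
    (hS.map_word_le hT hE hBcomm hST hpos)
  rw [word_starPowMulPowWord, word_starPowMulPowWord, length_starPowMulPowWord, norm_smul,
    Real.norm_of_nonneg (by positivity)] at hmoment
  calc ‖E ((star (S ^ n) * S ^ n) ^ p)‖
      ≤ c ^ (2 * n * p) * ‖E ((star (T ^ n) * T ^ n) ^ p)‖ := hmoment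
    _ ≤ c ^ (2 * n * p) * (‖T ^ n‖ * ‖T ^ n‖) ^ p := by
        gcongr
        rw [← CStarRing.norm_star_mul_self]
        exact (hE.contractive _).trans (norm_pow_le _ p)
    _ = ((c ^ n * ‖T ^ n‖) ^ 2) ^ p := by ring

theorem IsCondExp.covarianceLE_mul_mul (hE : IsCondExp B E)
    (hBcomm : ∀ x ∈ B, ∀ y ∈ B, x * y = y * x) {b₁ b₂ : A} (hb₁ : b₁ ∈ B) (hb₂ : b₂ ∈ B)
    (T : A) : CovarianceLE B E (‖b₁‖ * ‖b₂‖) (b₁ * T * b₂) T := by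
  intro e x hx hx_nonneg
  have hright : leftFactor b₂ b₁ e * x * star (leftFactor b₂ b₁ e) ≤
      ‖leftFactor b₂ b₁ e‖ ^ 2 • x :=
    conjugate_le_norm_sq_smul_of_commute (hBcomm _ (leftFactor_mem hb₂ hb₁ e) x hx) hx_nonneg
  have hmap := hE.monotone (star_right_conjugate_le_conjugate hright (letter T e))
  rw [mul_smul_comm, smul_mul_assoc, E.map_smul_of_tower] at hmap
  have hmap_nonneg := hE.positive _ (star_right_conjugate_nonneg
    (star_right_conjugate_nonneg hx_nonneg (leftFactor b₂ b₁ e)) (letter T e))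
  rw [hE.map_conj_letter_mul_mul hb₁ hb₂]
  refine (conjugate_le_norm_sq_smul_of_commute
    (hBcomm _ (leftFactor_mem hb₁ hb₂ e) _ (hE.mem_range _)) hmap_nonneg).trans ?_
  rw [← norm_leftFactor_mul_norm_leftFactor b₁ b₂ e, mul_pow, mul_smul]
  exact smul_le_smul_of_nonneg_left hmap (sq_nonneg _)

end Comparison

theorem quasinilpotent_smul_word_general
    {A : Type*} [CStarAlgebra A] [PartialOrder A] [StarOrderedRing A] {B : StarSubalgebra ℂ A}
    (hBcomm : ∀ x ∈ B, ∀ y ∈ B, x * y = y * x) {E : A →ₗ[ℂ] A} (hE : IsCondExp B E)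
    (hfaithful : ∀ x : A, E (star x * x) = 0 → x = 0) {T : A} (hT : IsBCircular B E T)
    {b₁ : A} (hb₁ : b₁ ∈ B) {b₂ : A} (hb₂ : b₂ ∈ B) :
    spectralRadius ℂ (b₁ * T * b₂) ≤ ‖b₁‖ₑ * ‖b₂‖ₑ * spectralRadius ℂ T := by
  have hnorm (n : ℕ) : ‖(b₁ * T * b₂) ^ n‖ ≤ (‖b₁‖ * ‖b₂‖) ^ n * ‖T ^ n‖ :=
    (hT.mul_mul hE hb₁ hb₂).norm_pow_le_mul_norm_pow hT hE hfaithful hBcomm (by positivity)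
      (hE.covarianceLE_mul_mul hBcomm hb₁ hb₂ T) n
  exact_mod_cast spectralRadius_le_of_nnnorm_pow_le (r := ‖b₁‖₊ * ‖b₂‖₊) hnorm

/-- If `T` is a quasinilpotent `B`-valued circular element over a commutative unital
C*-subalgebra `B`, with respect to a faithful conditional expectation `E`, then `b₁ T b₂`
is quasinilpotent for all `b₁, b₂ ∈ B`.  Quasinilpotency is expressed as vanishing of the
spectral radius. -/
theorem quasinilpotent_smul_word
    {A : Type*} [CStarAlgebra A] [PartialOrder A] [StarOrderedRing A]
    (B : StarSubalgebra ℂ A) (hBclosed : IsClosed (B : Set A))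
    (hBcomm : ∀ x ∈ B, ∀ y ∈ B, x * y = y * x)
    (E : A →ₗ[ℂ] A) (hE : IsCondExp B E)
    (hfaithful : ∀ x : A, E (star x * x) = 0 → x = 0)
    (T : A) (hT : IsBCircular B E T)
    (hTq : spectralRadius ℂ T = 0)
    (b₁ : A) (hb₁ : b₁ ∈ B) (b₂ : A) (hb₂ : b₂ ∈ B) :
    spectralRadius ℂ (b₁ * T * b₂) = 0 := by
  simpa only [hTq, mul_zero, nonpos_iff_eq_zero] using
    quasinilpotent_smul_word_general hBcomm hE hfaithful hT hb₁ hb₂
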